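/- Let L ≥ 1, let V_1,…,V_L and C_1,…,C_L be positive reals, and let ε > 0. Define N_ℓ* := ε^{−2} (Σ_{j=1}^L √(V_j C_j)) · √(V_ℓ / C_ℓ) for ℓ = 1,…,L. Then Σ_{ℓ=1}^L V_ℓ / N_ℓ* = ε², Σ_{ℓ=1}^L N_ℓ* C_ℓ = ε^{−2} (Σ_{ℓ=1}^L √(V_ℓ C_ℓ))², and for any positive reals N_1,…,N_L satisfying the variance constraint Σ_{ℓ=1}^L V_ℓ / N_ℓ ≤ ε², the total cost satisfies Σ_{ℓ=1}^L N_ℓ C_ℓ ≥ ε^{−2} (Σ_{ℓ=1}^L √(V_ℓ C_ℓ))². In other words, N_ℓ* minimizes the total cost Σ N_ℓ C_ℓ subject to the estimator variance bound Σ V_ℓ / N_ℓ ≤ ε². -/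

import Mathlib

open Real

/-- Optimality of the MLMC sample sizes
`N_ℓ* = ε⁻² (Σ_j √(V_j C_j)) √(V_ℓ / C_ℓ)`: they meet the variance constraint with equality,
attain total cost `ε⁻² (Σ_ℓ √(V_ℓ C_ℓ))²`, and any positive sample sizes satisfying the
variance constraint `Σ_ℓ V_ℓ / N_ℓ ≤ ε²` have at least that total cost. -/
theorem mlmc_optimal_sample_sizes
    (L : ℕ) (hL : 1 ≤ L) (V C : Fin L → ℝ)
    (hV : ∀ ℓ, 0 < V ℓ) (hC : ∀ ℓ, 0 < C ℓ)
    (ε : ℝ) (hε : 0 < ε)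
    (Nstar : Fin L → ℝ)
    (hNstar : ∀ ℓ, Nstar ℓ = ε⁻¹ ^ 2 * (∑ j, Real.sqrt (V j * C j)) * Real.sqrt (V ℓ / C ℓ)) :
    (∑ ℓ, V ℓ / Nstar ℓ = ε ^ 2)
      ∧ (∑ ℓ, Nstar ℓ * C ℓ = ε⁻¹ ^ 2 * (∑ ℓ, Real.sqrt (V ℓ * C ℓ)) ^ 2)
      ∧ ∀ N : Fin L → ℝ, (∀ ℓ, 0 < N ℓ) → (∑ ℓ, V ℓ / N ℓ ≤ ε ^ 2) →
          ε⁻¹ ^ 2 * (∑ ℓ, Real.sqrt (V ℓ * C ℓ)) ^ 2 ≤ ∑ ℓ, N ℓ * C ℓ := by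
  have hs : ∀ ℓ, 0 < Real.sqrt (V ℓ * C ℓ) := fun ℓ => Real.sqrt_pos.mpr (mul_pos (hV ℓ) (hC ℓ))
  have hsq : ∀ ℓ, Real.sqrt (V ℓ * C ℓ) ^ 2 = V ℓ * C ℓ := fun ℓ =>
    Real.sq_sqrt (mul_pos (hV ℓ) (hC ℓ)).le
  have hdiv : ∀ ℓ, Real.sqrt (V ℓ / C ℓ) = Real.sqrt (V ℓ * C ℓ) / C ℓ := by
    intro ℓ
    have hc := hC ℓ
    have h : V ℓ / C ℓ = (V ℓ * C ℓ) / (C ℓ) ^ 2 := by field_simp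
    rw [h, Real.sqrt_div (mul_pos (hV ℓ) hc).le, Real.sqrt_sq hc.le]
  have hS : 0 < ∑ j, Real.sqrt (V j * C j) :=
    Finset.sum_pos (fun j _ => hs j) ⟨⟨0, hL⟩, Finset.mem_univ _⟩
  have hcs : ∀ N : Fin L → ℝ, (∀ ℓ, 0 < N ℓ) →
      (∑ ℓ, Real.sqrt (V ℓ * C ℓ)) ^ 2 ≤ (∑ ℓ, V ℓ / N ℓ) * ∑ ℓ, N ℓ * C ℓ := by
    intro N hN
    apply Finset.sum_sq_le_sum_mul_sum_of_sq_eq_mul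
    · intro ℓ _
      exact (div_pos (hV ℓ) (hN ℓ)).le
    · intro ℓ _
      exact (mul_pos (hN ℓ) (hC ℓ)).le
    · intro ℓ _
      have hn := hN ℓ
      rw [hsq]
      field_simp
  generalize hSd : ∑ j, Real.sqrt (V j * C j) = S at *
  refine ⟨?_, ?_, ?_⟩
  · have h : ∀ ℓ, V ℓ / Nstar ℓ = ε ^ 2 / S * Real.sqrt (V ℓ * C ℓ) := by
      intro ℓ
      have hc := hC ℓ
      have h1 := hs ℓ
      have h2 := hsq ℓ
      rw [hNstar, hdiv]
      generalize Real.sqrt (V ℓ * C ℓ) = r at *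
      field_simp
      linarith
    rw [Finset.sum_congr rfl (fun ℓ _ => h ℓ), ← Finset.mul_sum, hSd]
    field_simp
  · have h : ∀ ℓ, Nstar ℓ * C ℓ = ε⁻¹ ^ 2 * S * Real.sqrt (V ℓ * C ℓ) := by
      intro ℓ
      have hc := hC ℓ
      rw [hNstar, hdiv]
      field_simp
    rw [Finset.sum_congr rfl (fun ℓ _ => h ℓ), ← Finset.mul_sum, hSd]
    ring
  · intro N hN hvar
    have h0 : 0 ≤ ∑ ℓ, N ℓ * C ℓ := Finset.sum_nonneg fun ℓ _ => (mul_pos (hN ℓ) (hC ℓ)).le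
    have h1 := (hcs N hN).trans (mul_le_mul_of_nonneg_right hvar h0)
    rw [inv_pow, inv_mul_le_iff₀ (by positivity)]
    exact h1
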